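/- arXiv:1604.01952 — 3 statements merged into one kernel-verified Lean document; each statement's English description precedes it below -/
import Mathlib

section
/- Let X ⊆ ℝ^k be an open convex set, let f : X → ℝ be differentiable and α-exp-concave for some α > 0, let H ⊆ ℝ^m be a nonempty compact convex set with ‖v − w‖ ≤ D for all v, w ∈ H (D > 0), let A be a k×m real matrix and b ∈ ℝ^k with A·w + b ∈ X for all w ∈ H, and suppose ‖Aᵀ∇f(x)‖ ≤ E for all x ∈ X (E > 0). Define g : H → ℝ by g(w) = f(A·w + b). If 0 < β ≤ (1/2)·min{1/(4DE), α}, then for all v, w ∈ H: g(v) ≥ g(w) + ⟨∇g(w), v − w⟩ + (β/2)·⟨∇g(w), w − v⟩², where ∇g(w) = Aᵀ∇f(A·w + b). -/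
open scoped RealInnerProductSpace

/-!
Exp-concavity passes to smaller exponents, so `f` is `2β`-exp-concave, and the tangent inequality
for `exp (-2β f)` reads `exp (-2β (f x - f y)) ≤ 1 + u` with `u = -2β f'(y) (x - y)`. The bounds on
the gradient and on the diameter give `u ≤ 1`, where `1 + u ≤ exp (u - u ^ 2 / 4)`; comparing
exponents yields the quadratic term.
-/

lemma one_add_le_exp_sub_sq_div_four {u : ℝ} (hu : u ≤ 1) : 1 + u ≤ Real.exp (u - u ^ 2 / 4) := by
  rcases le_total 0 u with hu₀ | hu₀
  · have h_nonneg : 0 ≤ u - u ^ 2 / 4 := by nlinarith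
    have h_sq : u ^ 2 / 4 ≤ (u - u ^ 2 / 4) ^ 2 / 2 := by
      have h_factor : (3 / 4) ^ 2 ≤ (1 - u / 4) ^ 2 := by gcongr; linarith
      nlinarith [mul_le_mul_of_nonneg_left h_factor (sq_nonneg u)]
    linarith [Real.quadratic_le_exp_of_nonneg h_nonneg]
  · rcases le_or_gt (1 + u) 0 with hu₁ | hu₁
    · exact hu₁.trans (Real.exp_pos _).le
    -- Padé bound `2 t / (t + 2) ≤ log (1 + t)` at `t = -u / (1 + u)`, where `1 + t = (1 + u)⁻¹`
    have h_log := Real.le_log_one_add_of_nonneg (x := -u / (1 + u))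
      (div_nonneg (neg_nonneg.2 hu₀) hu₁.le)
    have h_inv : 1 + -u / (1 + u) = (1 + u)⁻¹ := by field_simp; ring
    have h_pade : 2 * (-u / (1 + u)) / (-u / (1 + u) + 2) = -(2 * u) / (2 + u) := by
      field_simp; ring
    have h_quad : -u + u ^ 2 / 4 ≤ -(2 * u) / (2 + u) := by
      rw [le_div_iff₀ (by linarith)]
      nlinarith [mul_nonneg (sq_nonneg u) (by linarith : 0 ≤ 2 - u)]
    rw [h_inv, Real.log_inv, h_pade] at h_log
    exact (Real.log_le_iff_le_exp hu₁).1 (by linarith)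

section Module

variable {V : Type*} [AddCommMonoid V] [Module ℝ V]

/-- `α`-exp-concavity of `f` on `s`, the curvature condition behind the quadratic term of the lower
bound. As in `ConcaveOn`, convexity of `s` is part of the definition; `α` may be any real. -/
def ExpConcaveOn (α : ℝ) (s : Set V) (f : V → ℝ) : Prop :=
  ConcaveOn ℝ s fun x => Real.exp (-α * f x)

lemma ExpConcaveOn.anti {α γ : ℝ} {s : Set V} {f : V → ℝ} (hf : ExpConcaveOn α s f) (hγ : 0 ≤ γ)
    (hγα : γ ≤ α) : ExpConcaveOn γ s f := by
  have hα : 0 ≤ α := hγ.trans hγα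
  have hp₀ : 0 ≤ γ / α := div_nonneg hγ hα
  have hp₁ : γ / α ≤ 1 := div_le_one_of_le₀ hγα hα
  have h_mul : α * (γ / α) = γ :=
    mul_div_cancel_of_imp' fun hα₀ => le_antisymm (hα₀ ▸ hγα) hγ
  have h_rpow (z : V) : Real.exp (-γ * f z) = Real.exp (-α * f z) ^ (γ / α) := by
    rw [← Real.exp_mul, mul_right_comm, neg_mul α, h_mul]
  refine ⟨hf.1, fun x hx y hy a b ha hb hab => ?_⟩
  simp only [h_rpow]
  calc a • Real.exp (-α * f x) ^ (γ / α) + b • Real.exp (-α * f y) ^ (γ / α)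
      ≤ (a • Real.exp (-α * f x) + b • Real.exp (-α * f y)) ^ (γ / α) :=
        (Real.concaveOn_rpow hp₀ hp₁).2 (Real.exp_pos _).le (Real.exp_pos _).le ha hb hab
    _ ≤ Real.exp (-α * f (a • x + b • y)) ^ (γ / α) :=
        Real.rpow_le_rpow (by positivity) (hf.2 hx hy ha hb hab) hp₀

end Module

section NormedSpace

variable {V W : Type*} [NormedAddCommGroup V] [NormedSpace ℝ V]
  [NormedAddCommGroup W] [NormedSpace ℝ W] {s : Set V} {x y : V}

lemma concaveOn_le_add_of_hasFDerivWithinAt {φ : V → ℝ} {φ' : V →L[ℝ] ℝ} (hφ : ConcaveOn ℝ s φ)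
    (hx : x ∈ s) (hy : y ∈ s) (hφ' : HasFDerivWithinAt φ φ' s y) :
    φ x ≤ φ y + φ' (x - y) := by
  let l : ℝ →ᵃ[ℝ] V := AffineMap.lineMap y x
  have h_deriv : HasDerivWithinAt (φ ∘ l) (φ' (x - y)) (l ⁻¹' s) 0 :=
    HasFDerivWithinAt.comp_hasDerivWithinAt_of_eq 0 hφ'
      AffineMap.hasDerivAt_lineMap.hasDerivWithinAt (Set.mapsTo_preimage l s)
      (AffineMap.lineMap_apply_zero y x).symm
  have h_slope := (hφ.comp_affineMap l).slope_le_of_hasDerivWithinAt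
    (by simpa [l] using hy) (by simpa [l] using hx) one_pos h_deriv
  simp only [slope_def_field, Function.comp_apply, l, AffineMap.lineMap_apply_one,
    AffineMap.lineMap_apply_zero, sub_zero, div_one] at h_slope
  linarith

namespace ExpConcaveOn

variable {α γ : ℝ} {f : V → ℝ} {f' : V →L[ℝ] ℝ}

lemma exp_neg_mul_sub_le (hf : ExpConcaveOn α s f) (hx : x ∈ s) (hy : y ∈ s)
    (hf' : HasFDerivWithinAt f f' s y) :
    Real.exp (-α * (f x - f y)) ≤ 1 + -α * f' (x - y) := by
  have h_tangent := concaveOn_le_add_of_hasFDerivWithinAt hf hx hy (hf'.const_mul (-α)).exp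
  rw [mul_sub, Real.exp_sub, div_le_iff₀ (Real.exp_pos _)]
  calc Real.exp (-α * f x)
      ≤ Real.exp (-α * f y) + Real.exp (-α * f y) * (-α * f' (x - y)) := h_tangent
    _ = (1 + -α * f' (x - y)) * Real.exp (-α * f y) := by ring

lemma add_fderiv_add_sq_le (hf : ExpConcaveOn γ s f) (hγ : 0 < γ) (hx : x ∈ s) (hy : y ∈ s)
    (hf' : HasFDerivWithinAt f f' s y) (hle : -γ * f' (x - y) ≤ 1) :
    f y + f' (x - y) + γ / 4 * f' (x - y) ^ 2 ≤ f x := by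
  set d := f' (x - y)
  have h_exponents : -γ * (f x - f y) ≤ -γ * d - (-γ * d) ^ 2 / 4 :=
    Real.exp_le_exp.1
      ((hf.exp_neg_mul_sub_le hx hy hf').trans (one_add_le_exp_sub_sq_div_four hle))
  have h_scaled : γ * (d + γ / 4 * d ^ 2) ≤ γ * (f x - f y) := by linarith
  linarith [le_of_mul_le_mul_left h_scaled hγ]

end ExpConcaveOn

theorem expConcave_affine_composition_lower_bound_general {X : Set W} {f : W → ℝ}
    {f' : W → W →L[ℝ] ℝ} (hf : ∀ x ∈ X, HasFDerivWithinAt f (f' x) X x)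
    {α : ℝ} (hexp : ExpConcaveOn α X f)
    {H : Set V} {D : ℝ} (hdiam : ∀ v ∈ H, ∀ w ∈ H, ‖v - w‖ ≤ D)
    (A : V →L[ℝ] W) (b : W) (hAb : ∀ w ∈ H, A w + b ∈ X)
    {E : ℝ} (hgrad : ∀ x ∈ X, ‖f' x ∘L A‖ ≤ E)
    {β : ℝ} (hβ0 : 0 < β) (hβα : 2 * β ≤ α) (hβDE : 2 * β * (D * E) ≤ 1) :
    ∀ v ∈ H, ∀ w ∈ H,
      f (A v + b) ≥ f (A w + b) + (f' (A w + b) ∘L A) (v - w)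
        + (β / 2) * (f' (A w + b) ∘L A) (w - v) ^ 2 := by
  intro v hv w hw
  have hw' := hAb w hw
  set L := f' (A w + b) ∘L A with hL
  have h_sub : f' (A w + b) (A v + b - (A w + b)) = L (v - w) := by simp [hL]
  have h_neg : -L (v - w) = L (w - v) := by rw [← map_neg, neg_sub]
  have h_norm : L (w - v) ≤ D * E := by
    calc L (w - v) ≤ ‖L‖ * ‖w - v‖ := (le_abs_self _).trans (L.le_opNorm _)
      _ ≤ E * D := mul_le_mul (hgrad _ hw') (hdiam w hw v hv) (norm_nonneg _)
          ((norm_nonneg _).trans (hgrad _ hw'))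
      _ = D * E := mul_comm E D
  have h_le : -(2 * β) * L (v - w) ≤ 1 := by
    rw [neg_mul, ← mul_neg, h_neg]
    exact (mul_le_mul_of_nonneg_left h_norm (by positivity)).trans hβDE
  have h_bound := (hexp.anti (by positivity) hβα).add_fderiv_add_sq_le (by positivity)
    (hAb v hv) hw' (hf _ hw') (by rwa [h_sub])
  rw [h_sub] at h_bound
  rw [← h_neg, neg_sq]
  linarith

end NormedSpace

lemma toDual_toEuclideanLin_transpose {m n : Type*} [Fintype m] [Fintype n] [DecidableEq m]
    [DecidableEq n] (A : Matrix m n ℝ) (p : EuclideanSpace ℝ m) :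
    InnerProductSpace.toDual ℝ _ (Matrix.toEuclideanLin A.transpose p) =
      InnerProductSpace.toDual ℝ _ p ∘L (Matrix.toEuclideanLin A).toContinuousLinearMap := by
  ext v
  simp only [InnerProductSpace.toDual_apply_apply, ContinuousLinearMap.comp_apply,
    LinearMap.coe_toContinuousLinearMap']
  rw [← Matrix.conjTranspose_eq_transpose_of_trivial,
    Matrix.toEuclideanLin_conjTranspose_eq_adjoint, LinearMap.adjoint_inner_left]

/-- **Exp-concave composition lemma (Lemma for Online Newton Step).**
Let `X ⊆ ℝ^k` be open convex, `f : X → ℝ` differentiable and `α`-exp-concave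
(`x ↦ exp (-α * f x)` is concave on `X`), `H ⊆ ℝ^m` nonempty compact convex of
diameter at most `D > 0`, `A` a `k × m` matrix and `b ∈ ℝ^k` with `A·w + b ∈ X`
for `w ∈ H`, and `‖A.transpose∇f(x)‖ ≤ E` on `X`.  If `0 < β ≤ (1/2)·min {1/(4DE), α}`
then for `g(w) = f(A·w + b)` and all `v, w ∈ H`:
`g v ≥ g w + ⟪∇g w, v - w⟫ + (β/2)·⟪∇g w, w - v⟫²` where `∇g w = A.transpose∇f(A·w + b)`. -/
theorem expConcave_affine_composition_lower_bound
    {k m : ℕ} (X : Set (EuclideanSpace ℝ (Fin k)))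
    (hXopen : IsOpen X) (hXconv : Convex ℝ X)
    (f : EuclideanSpace ℝ (Fin k) → ℝ)
    (f' : EuclideanSpace ℝ (Fin k) → EuclideanSpace ℝ (Fin k))
    (hf : ∀ x ∈ X, HasGradientAt f (f' x) x)
    (α : ℝ) (hα : 0 < α)
    (hexp : ConcaveOn ℝ X (fun x => Real.exp (-α * f x)))
    (H : Set (EuclideanSpace ℝ (Fin m)))
    (hHne : H.Nonempty) (hHcomp : IsCompact H) (hHconv : Convex ℝ H)
    (D : ℝ) (hD : 0 < D) (hdiam : ∀ v ∈ H, ∀ w ∈ H, ‖v - w‖ ≤ D)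
    (A : Matrix (Fin k) (Fin m) ℝ) (b : EuclideanSpace ℝ (Fin k))
    (hAb : ∀ w ∈ H, Matrix.toEuclideanLin A w + b ∈ X)
    (E : ℝ) (hE : 0 < E)
    (hgrad : ∀ x ∈ X, ‖Matrix.toEuclideanLin A.transpose (f' x)‖ ≤ E)
    (β : ℝ) (hβ0 : 0 < β) (hβ : β ≤ (1/2) * min (1/(4*D*E)) α) :
    ∀ v ∈ H, ∀ w ∈ H,
      f (Matrix.toEuclideanLin A v + b) ≥
        f (Matrix.toEuclideanLin A w + b)
        + ⟪Matrix.toEuclideanLin A.transpose (f' (Matrix.toEuclideanLin A w + b)), v - w⟫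
        + (β/2) * ⟪Matrix.toEuclideanLin A.transpose (f' (Matrix.toEuclideanLin A w + b)), w - v⟫^2 := by
  have hβα : 2 * β ≤ α := by linarith [min_le_right (1 / (4 * D * E)) α]
  have hβDE : 2 * β * (D * E) ≤ 1 := by
    have h_quarter : 2 * β ≤ 1 / (4 * D * E) := by linarith [min_le_left (1 / (4 * D * E)) α]
    rw [le_div_iff₀ (by positivity)] at h_quarter
    linarith [mul_pos (mul_pos hβ0 hD) hE]
  have h_dual (x : EuclideanSpace ℝ (Fin k)) := toDual_toEuclideanLin_transpose A (f' x)
  have hgrad' : ∀ x ∈ X, ‖InnerProductSpace.toDual ℝ _ (f' x) ∘L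
      (Matrix.toEuclideanLin A).toContinuousLinearMap‖ ≤ E := by
    simpa only [← h_dual, LinearIsometryEquiv.norm_map] using hgrad
  simpa only [← h_dual, InnerProductSpace.toDual_apply_apply,
    LinearMap.coe_toContinuousLinearMap'] using
    expConcave_affine_composition_lower_bound_general
      (fun x hx => (hf x hx).hasFDerivAt.hasFDerivWithinAt) hexp hdiam
      (Matrix.toEuclideanLin A).toContinuousLinearMap b hAb hgrad' hβ0 hβα hβDE
end

section
/- Let K ⊆ ℝ^d be a nonempty closed convex set, let ℓ : ℝ^d → ℝ be convex and differentiable, let η > 0, let w ∈ K and set w' = Π_K(w − η·∇ℓ(w)). Then for every u ∈ K: ℓ(w) − ℓ(u) ≤ (‖w − u‖² − ‖w' − u‖²)/(2η) + (η/2)·‖∇ℓ(w)‖². -/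
/-- `p` is the Euclidean (metric) projection of `y` onto `K`: the point of `K`
nearest to `y`. -/
def IsProjection {E : Type*} [NormedAddCommGroup E] (K : Set E) (y p : E) : Prop :=
  p ∈ K ∧ ∀ v ∈ K, ‖p - y‖ ≤ ‖v - y‖

section FirstOrderConvexity

variable {E : Type*} [NormedAddCommGroup E] [NormedSpace ℝ E] {s : Set E} {f : E → ℝ} {x y : E}

theorem le_sub_of_convexOn_of_hasFDerivWithinAt {f' : E →L[ℝ] ℝ} (hf : ConvexOn ℝ s f)
    (hf' : HasFDerivWithinAt f f' s x) (hx : x ∈ s) (hy : y ∈ s) :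
    f' (y - x) ≤ f y - f x := by
  let line : ℝ →ᵃ[ℝ] E := AffineMap.lineMap x y
  have line_zero : line 0 = x := AffineMap.lineMap_apply_zero x y
  have line_one : line 1 = y := AffineMap.lineMap_apply_one x y
  have convexOn_line : ConvexOn ℝ (line ⁻¹' s) (f ∘ line) := hf.comp_affineMap line
  have hasDerivWithinAt_line : HasDerivWithinAt (f ∘ line) (f' (y - x)) (line ⁻¹' s) 0 :=
    HasFDerivWithinAt.comp_hasDerivWithinAt 0 (line_zero.symm ▸ hf')
      AffineMap.hasDerivWithinAt_lineMap (Set.mapsTo_preimage line s)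
  have le_slope : f' (y - x) ≤ slope (f ∘ line) 0 1 :=
    convexOn_line.le_slope_of_hasDerivWithinAt (by simpa [line_zero] using hx)
      (by simpa [line_one] using hy) zero_lt_one hasDerivWithinAt_line
  simpa [slope_def_field, line_zero, line_one] using le_slope

end FirstOrderConvexity

section Projection

open scoped RealInnerProductSpace

variable {E : Type*} [NormedAddCommGroup E] [InnerProductSpace ℝ E]
  {K : Set E} {y p u w w' g : E} {η : ℝ}

namespace IsProjection

theorem real_inner_sub_sub_nonpos (hK : Convex ℝ K) (hp : IsProjection K y p) (hu : u ∈ K) :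
    ⟪y - p, u - p⟫ ≤ 0 := by
  have isMinOn_norm : IsMinOn (fun v ↦ ‖y - v‖) K p := by
    simpa only [isMinOn_iff, norm_sub_rev y] using hp.2
  exact (norm_eq_iInf_iff_real_inner_le_zero hK hp.1).1 (isMinOn_norm.iInf_eq hp.1).symm u hu

theorem norm_sub_le (hK : Convex ℝ K) (hp : IsProjection K y p) (hu : u ∈ K) :
    ‖p - u‖ ≤ ‖y - u‖ := by
  refine le_of_sq_le_sq ?_ (norm_nonneg _)
  calc
    ‖p - u‖ ^ 2 ≤ ‖y - p‖ ^ 2 - 2 * ⟪y - p, u - p⟫ + ‖u - p‖ ^ 2 := by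
      rw [norm_sub_rev p u]
      linarith [sq_nonneg ‖y - p‖, hp.real_inner_sub_sub_nonpos hK hu]
    _ = ‖y - u‖ ^ 2 := by rw [← norm_sub_sq_real, sub_sub_sub_cancel_right]

theorem real_inner_sub_le_of_sub_smul (hK : Convex ℝ K) (hη : 0 < η)
    (hw' : IsProjection K (w - η • g) w') (hu : u ∈ K) :
    ⟪g, w - u⟫ ≤ (‖w - u‖ ^ 2 - ‖w' - u‖ ^ 2) / (2 * η) + (η / 2) * ‖g‖ ^ 2 := by
  have sq_dist_le : ‖w' - u‖ ^ 2 ≤ ‖w - u‖ ^ 2 - 2 * η * ⟪g, w - u⟫ + η ^ 2 * ‖g‖ ^ 2 :=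
    calc
      ‖w' - u‖ ^ 2 ≤ ‖w - η • g - u‖ ^ 2 := by gcongr; exact hw'.norm_sub_le hK hu
      _ = ‖w - u‖ ^ 2 - 2 * η * ⟪g, w - u⟫ + η ^ 2 * ‖g‖ ^ 2 := by
        rw [sub_right_comm, norm_sub_sq_real, real_inner_smul_right, real_inner_comm, norm_smul,
          mul_pow, Real.norm_eq_abs, sq_abs, mul_assoc]
  calc
    ⟪g, w - u⟫ = 2 * η * ⟪g, w - u⟫ / (2 * η) := by field_simp
    _ ≤ (‖w - u‖ ^ 2 - ‖w' - u‖ ^ 2 + η ^ 2 * ‖g‖ ^ 2) / (2 * η) := by gcongr; linarith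
    _ = (‖w - u‖ ^ 2 - ‖w' - u‖ ^ 2) / (2 * η) + (η / 2) * ‖g‖ ^ 2 := by field_simp

end IsProjection

theorem projected_gradient_step_bound_general [CompleteSpace E] {ℓ : E → ℝ}
    (hconv : ConvexOn ℝ K ℓ) (hgrad : HasGradientWithinAt ℓ g K w) (hη : 0 < η) (hw : w ∈ K)
    (hproj : IsProjection K (w - η • g) w') (hu : u ∈ K) :
    ℓ w - ℓ u ≤ (‖w - u‖ ^ 2 - ‖w' - u‖ ^ 2) / (2 * η) + (η / 2) * ‖g‖ ^ 2 := by
  have first_order : ⟪g, u - w⟫ ≤ ℓ u - ℓ w :=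
    le_sub_of_convexOn_of_hasFDerivWithinAt hconv hgrad.hasFDerivWithinAt hw hu
  calc
    ℓ w - ℓ u ≤ ⟪g, w - u⟫ := by rw [← neg_sub u w, inner_neg_right]; linarith
    _ ≤ (‖w - u‖ ^ 2 - ‖w' - u‖ ^ 2) / (2 * η) + (η / 2) * ‖g‖ ^ 2 :=
      hproj.real_inner_sub_le_of_sub_smul hconv.1 hη hu

end Projection

/-- **One-step descent lemma for projected gradient descent.**
Let `K ⊆ ℝ^d` be nonempty closed convex, `ℓ` convex and differentiable, `η > 0`,
`w ∈ K` and `w' = Π_K (w - η • ∇ℓ w)`.  Then for every `u ∈ K`: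
`ℓ w - ℓ u ≤ (‖w - u‖² - ‖w' - u‖²)/(2η) + (η/2)·‖∇ℓ w‖²`. -/
theorem projected_gradient_step_bound
    {d : ℕ} (K : Set (EuclideanSpace ℝ (Fin d)))
    (hKne : K.Nonempty) (hKcl : IsClosed K) (hKconv : Convex ℝ K)
    (ℓ : EuclideanSpace ℝ (Fin d) → ℝ)
    (ℓ' : EuclideanSpace ℝ (Fin d) → EuclideanSpace ℝ (Fin d))
    (hconv : ConvexOn ℝ Set.univ ℓ)
    (hgrad : ∀ v, HasGradientAt ℓ (ℓ' v) v)
    (η : ℝ) (hη : 0 < η)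
    (w w' : EuclideanSpace ℝ (Fin d)) (hw : w ∈ K)
    (hproj : IsProjection K (w - η • ℓ' w) w') :
    ∀ u ∈ K,
      ℓ w - ℓ u ≤ (‖w - u‖^2 - ‖w' - u‖^2)/(2*η) + (η/2) * ‖ℓ' w‖^2 := by
  intro u hu
  exact projected_gradient_step_bound_general (hconv.subset K.subset_univ hKconv)
    (hasGradientWithinAt_iff_hasFDerivWithinAt.2 (hgrad w).hasFDerivAt.hasFDerivWithinAt)
    hη hw hproj hu
end

section
/- (Online Newton Step / NProp regret bound.) Let K ⊆ ℝ^d be a nonempty compact convex set with ‖x − y‖ ≤ D for all x, y ∈ K (D > 0), let α, L > 0, and set β = (1/2)·min{1/(4DL), α}. For t = 1,…,T let g^t : ℝ^d → ℝ be differentiable with ‖∇g^t(w)‖ ≤ L for all w ∈ K and satisfying the curvature condition g^t(v) ≥ g^t(w) + ⟨∇g^t(w), v − w⟩ + (β/2)·⟨∇g^t(w), w − v⟩² for all v, w ∈ K. Run: w^1 ∈ K, A^0 = (1/(β²D²))·I_d; on round t, with ∇^t := ∇g^t(w^t), set A^t = A^{t−1} + ∇^t(∇^t)ᵀ, y^t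 = w^t − (1/β)·(A^t)^{−1}·∇^t, and let w^{t+1} be the point of K minimizing v ↦ ⟨v − y^t, A^t·(v − y^t)⟩. Then each A^t is positive definite (hence invertible), and for every u ∈ K and every T ≥ 4: ∑_{t=1}^T ( g^t(w^t) − g^t(u) ) ≤ 5·d·(1/α + L·D)·log T. -/
open scoped RealInnerProductSpace

/-!
Projecting in the norm of `A t` contracts the distance to `u`, so round `t` costs at most
`1/(2β) * ⟪∇, (A t)⁻¹ ∇⟫` plus the drop of `β/2 * ‖w t - u‖²`, both measured in `A t`. Passing from
`A (t-1)` to `A t` increases the squared norm of `w t - u` by exactly `⟪∇, w t - u⟫²`, which the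
curvature of the losses pays for, so the distances telescope. By the matrix determinant lemma
`⟪∇, (A t)⁻¹ ∇⟫ = 1 - det A (t-1) / det A t ≤ log det A t - log det A (t-1)`, so these telescope as
well, and AM-GM on the eigenvalues bounds `log det A T` by the trace.
-/

section QuadraticForm

variable {E : Type*} [NormedAddCommGroup E] [InnerProductSpace ℝ E]
  {M : E →ₗ[ℝ] E} {K : Set E} {p u x y : E}

lemma inner_add_map_add_of_isSymmetric (hM : M.IsSymmetric) (x y : E) :
    ⟪x + y, M (x + y)⟫ = ⟪x, M x⟫ + 2 * ⟪y, M x⟫ + ⟪y, M y⟫ := by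
  have hxy : ⟪x, M y⟫ = ⟪y, M x⟫ := by rw [← hM, real_inner_comm]
  rw [map_add, inner_add_left, inner_add_right, inner_add_right, hxy]
  ring

lemma inner_sub_map_nonneg_of_isMinOn (hM : M.IsSymmetric) (hK : Convex ℝ K)
    (hp : p ∈ K) (hu : u ∈ K) (hmin : IsMinOn (fun v ↦ ⟪v - y, M (v - y)⟫) K p) :
    0 ≤ ⟪u - p, M (p - y)⟫ := by
  set a := ⟪u - p, M (p - y)⟫
  set b := ⟪u - p, M (u - p)⟫
  have hslope : ∀ s ∈ Set.Ioo (0 : ℝ) 1, 0 ≤ 2 * a + s * b := by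
    intro s hs
    have hle : ⟪p - y, M (p - y)⟫ ≤ ⟪p + s • (u - p) - y, M (p + s • (u - p) - y)⟫ :=
      hmin (hK.add_smul_sub_mem hp hu ⟨hs.1.le, hs.2.le⟩)
    rw [add_sub_right_comm, inner_add_map_add_of_isSymmetric hM, map_smul, real_inner_smul_left,
      real_inner_smul_left, real_inner_smul_right] at hle
    exact nonneg_of_mul_nonneg_right (by linarith : 0 ≤ s * (2 * a + s * b)) hs.1
  have hlim : Filter.Tendsto (fun s : ℝ ↦ 2 * a + s * b) (nhdsWithin 0 (Set.Ioi 0))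
      (nhds (2 * a + 0 * b)) :=
    (Continuous.tendsto (by fun_prop) 0).mono_left nhdsWithin_le_nhds
  have hlim_nonneg : 0 ≤ 2 * a + 0 * b :=
    ge_of_tendsto hlim (Filter.eventually_of_mem (Ioo_mem_nhdsGT one_pos) hslope)
  linarith

lemma inner_sub_map_sub_le_of_isMinOn (hM : M.IsPositive) (hK : Convex ℝ K)
    (hp : p ∈ K) (hu : u ∈ K) (hmin : IsMinOn (fun v ↦ ⟪v - y, M (v - y)⟫) K p) :
    ⟪p - u, M (p - u)⟫ ≤ ⟪y - u, M (y - u)⟫ := by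
  have hvar := inner_sub_map_nonneg_of_isMinOn hM.isSymmetric hK hp hu hmin
  have hcross : ⟪p - u, M (y - p)⟫ = ⟪u - p, M (p - y)⟫ := by
    rw [← neg_sub u p, ← neg_sub p y, map_neg, inner_neg_neg]
  have hexp := inner_add_map_add_of_isSymmetric hM.isSymmetric (y - p) (p - u)
  rw [sub_add_sub_cancel, hcross] at hexp
  linarith [hM.inner_nonneg_right (y - p)]

/- With `x = M⁻¹ ∇`, this is the projected Newton step of size `η` from `w` along the gradient
`∇ = M x`. -/
lemma two_mul_inner_map_sub_le_of_isMinOn (hM : M.IsPositive) (hK : Convex ℝ K)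
    {η : ℝ} {w : E} (hp : p ∈ K) (hu : u ∈ K)
    (hmin : IsMinOn (fun v ↦ ⟪v - (w - η • x), M (v - (w - η • x))⟫) K p) :
    2 * η * ⟪M x, w - u⟫ ≤
      η ^ 2 * ⟪x, M x⟫ + (⟪w - u, M (w - u)⟫ - ⟪p - u, M (p - u)⟫) := by
  have hcontr := inner_sub_map_sub_le_of_isMinOn hM hK hp hu hmin
  have hexp := inner_add_map_add_of_isSymmetric hM.isSymmetric (w - u) (-(η • x))
  rw [← sub_eq_add_neg, sub_right_comm, map_neg, map_smul, inner_neg_neg, inner_neg_left,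
    real_inner_smul_left, real_inner_smul_left, real_inner_smul_right,
    ← hM.isSymmetric x (w - u)] at hexp
  linarith

end QuadraticForm

section Determinant

open Matrix

variable {ι : Type*}

lemma posDef_add_vecMulVec_self [Finite ι] {A : Matrix ι ι ℝ} (hA : A.PosDef) (v : ι → ℝ) :
    (A + vecMulVec v v).PosDef :=
  hA.add_posSemidef (by simpa using posSemidef_vecMulVec_self_star v)

variable [Fintype ι] [DecidableEq ι]

lemma det_sub_vecMulVec {R : Type*} [CommRing R] {B : Matrix ι ι R} (hB : IsUnit B.det)
    (u v : ι → R) : (B - vecMulVec u v).det = B.det * (1 - v ⬝ᵥ (B⁻¹ *ᵥ u)) := by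
  have hrank : B - vecMulVec u v = B + replicateCol Unit (-u) * replicateRow Unit v := by
    rw [← vecMulVec_eq, neg_vecMulVec, sub_eq_add_neg]
  rw [hrank, det_add_replicateCol_mul_replicateRow hB, Matrix.mul_assoc, ← replicateCol_mulVec,
    det_unique (n := Unit), Matrix.add_apply, one_apply_eq, replicateRow_mul_replicateCol_apply,
    mulVec_neg, dotProduct_neg, sub_eq_add_neg]

lemma dotProduct_inv_add_vecMulVec_le_log_det_sub {A : Matrix ι ι ℝ} (hA : A.PosDef)
    (v : ι → ℝ) :
    v ⬝ᵥ ((A + vecMulVec v v)⁻¹ *ᵥ v) ≤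
      Real.log (A + vecMulVec v v).det - Real.log A.det := by
  have hB := (posDef_add_vecMulVec_self hA v).det_pos
  have hdet := det_sub_vecMulVec hB.ne'.isUnit v v
  rw [add_sub_cancel_right] at hdet
  have hratio : 0 < 1 - v ⬝ᵥ ((A + vecMulVec v v)⁻¹ *ᵥ v) :=
    pos_of_mul_pos_right (hdet ▸ hA.det_pos) hB.le
  rw [hdet, Real.log_mul hB.ne' hratio.ne']
  linarith [Real.log_le_sub_one_of_pos hratio]

lemma log_det_le_card_mul_log_trace_div_card {A : Matrix ι ι ℝ} (hA : A.PosDef) :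
    Real.log A.det ≤ Fintype.card ι * Real.log (A.trace / Fintype.card ι) := by
  cases isEmpty_or_nonempty ι with
  | inl _ => simp
  | inr _ =>
    set μ := hA.isHermitian.eigenvalues
    set s := A.trace / Fintype.card ι
    have hμ : ∀ i, 0 < μ i := hA.eigenvalues_pos
    have htr : A.trace = ∑ i, μ i := by simpa using hA.isHermitian.trace_eq_sum_eigenvalues
    have hdet : A.det = ∏ i, μ i := by simpa using hA.isHermitian.det_eq_prod_eigenvalues
    have hs : 0 < s := div_pos hA.trace_pos (by positivity)
    have htangent : ∀ i, Real.log (μ i) ≤ μ i / s - 1 + Real.log s := by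
      intro i
      have hlog := Real.log_le_sub_one_of_pos (div_pos (hμ i) hs)
      rw [Real.log_div (hμ i).ne' hs.ne'] at hlog
      linarith
    have hsum : ∑ i, μ i / s = Fintype.card ι := by
      rw [← Finset.sum_div, ← htr]
      exact div_div_cancel₀ hA.trace_pos.ne'
    calc Real.log A.det = ∑ i, Real.log (μ i) := by
          rw [hdet, Real.log_prod fun i _ ↦ (hμ i).ne']
      _ ≤ ∑ i, (μ i / s - 1 + Real.log s) := Finset.sum_le_sum fun i _ ↦ htangent i
      _ = Fintype.card ι * Real.log s := by
          simp [Finset.sum_add_distrib, hsum]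

end Determinant

section EuclideanLin

open Matrix

variable {ι : Type*} [Fintype ι] [DecidableEq ι]

lemma inner_toEuclideanLin_vecMulVec_self (a x : EuclideanSpace ℝ ι) :
    ⟪x, toEuclideanLin (vecMulVec a a) x⟫ = ⟪a, x⟫ ^ 2 := by
  simp only [EuclideanSpace.inner_eq_star_dotProduct, ofLp_toLpLin, toLin'_apply,
    vecMulVec_mulVec, star_trivial, op_smul_eq_smul, smul_dotProduct, smul_eq_mul]
  rw [dotProduct_comm x.ofLp, sq]

lemma toEuclideanLin_apply_inv {A : Matrix ι ι ℝ} (hA : IsUnit A.det)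
    (x : EuclideanSpace ℝ ι) : toEuclideanLin A (toEuclideanLin A⁻¹ x) = x :=
  WithLp.ofLp_injective 2 (by simp [ofLp_toLpLin, mul_nonsing_inv A hA])

end EuclideanLin

section RegularizedGram

open Matrix

variable {ι : Type*} [DecidableEq ι]

/-- The preconditioner `ε I + ∑_{s ≤ t} G s (G s)ᵀ` of the Online Newton Step method after `t`
rounds with gradients `G 1, …, G t`. -/
def regularizedGram (ε : ℝ) (G : ℕ → EuclideanSpace ℝ ι) (t : ℕ) : Matrix ι ι ℝ :=
  ε • 1 + ∑ s ∈ Finset.Icc 1 t, vecMulVec (G s) (G s)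

variable {ε L : ℝ} {G : ℕ → EuclideanSpace ℝ ι} {T : ℕ}

lemma regularizedGram_zero : regularizedGram ε G 0 = ε • 1 := by
  simp [regularizedGram]

lemma regularizedGram_succ (t : ℕ) :
    regularizedGram ε G (t + 1) =
      regularizedGram ε G t + vecMulVec (G (t + 1)) (G (t + 1)) := by
  rw [regularizedGram, Finset.sum_Icc_succ_top (by omega), ← add_assoc, regularizedGram]

lemma posDef_regularizedGram [Finite ι] (hε : 0 < ε) (t : ℕ) : (regularizedGram ε G t).PosDef := by
  induction t with
  | zero => rw [regularizedGram_zero]; exact PosDef.one.smul hε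
  | succ t ih => rw [regularizedGram_succ]; exact posDef_add_vecMulVec_self ih _

variable [Fintype ι]

lemma trace_regularizedGram (t : ℕ) :
    (regularizedGram ε G t).trace =
      Fintype.card ι * ε + ∑ s ∈ Finset.Icc 1 t, ‖G s‖ ^ 2 := by
  simp only [regularizedGram, trace_add, trace_smul, trace_one, trace_sum, trace_vecMulVec,
    smul_eq_mul, mul_comm ε, EuclideanSpace.real_norm_sq_eq, dotProduct, ← sq]

lemma log_det_regularizedGram_sub_le (hε : 0 < ε) (hG : ∀ t ∈ Finset.Icc 1 T, ‖G t‖ ≤ L) :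
    Real.log (regularizedGram ε G T).det - Real.log (regularizedGram ε G 0).det ≤
      Fintype.card ι * Real.log (1 + T * L ^ 2 / (ε * Fintype.card ι)) := by
  cases isEmpty_or_nonempty ι with
  | inl _ => simp
  | inr _ =>
    have hcard : (0 : ℝ) < Fintype.card ι := by positivity
    have hsum : ∑ t ∈ Finset.Icc 1 T, ‖G t‖ ^ 2 ≤ T * L ^ 2 := by
      simpa using Finset.sum_le_card_nsmul _ _ (L ^ 2)
        fun t ht ↦ pow_le_pow_left₀ (norm_nonneg _) (hG t ht) 2
    have htr : (regularizedGram ε G T).trace / Fintype.card ι ≤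
        ε * (1 + T * L ^ 2 / (ε * Fintype.card ι)) := by
      rw [trace_regularizedGram, div_le_iff₀ hcard]
      field_simp
      linarith
    have hdet := calc
      Real.log (regularizedGram ε G T).det
        ≤ Fintype.card ι * Real.log ((regularizedGram ε G T).trace / Fintype.card ι) :=
          log_det_le_card_mul_log_trace_div_card (posDef_regularizedGram hε T)
      _ ≤ Fintype.card ι * Real.log (ε * (1 + T * L ^ 2 / (ε * Fintype.card ι))) := by
          gcongr
          exact div_pos (posDef_regularizedGram hε T).trace_pos hcard
      _ = Fintype.card ι * (Real.log ε + Real.log (1 + T * L ^ 2 / (ε * Fintype.card ι))) := by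
          rw [Real.log_mul hε.ne' (by positivity)]
    have hdet_zero : Real.log (regularizedGram ε G 0).det = Fintype.card ι * Real.log ε := by
      rw [regularizedGram_zero, det_smul, det_one, mul_one, Real.log_pow]
    linarith

end RegularizedGram

/-- The point to which the unprojected Newton step of size `1/β` moves `w t` on round `t`, called
`y t` in the algorithm. -/
noncomputable def newtonPoint {ι : Type*} [Fintype ι] [DecidableEq ι] (β ε : ℝ)
    (G w : ℕ → EuclideanSpace ℝ ι) (t : ℕ) : EuclideanSpace ℝ ι :=
  w t - (1 / β) • Matrix.toEuclideanLin (regularizedGram ε G t)⁻¹ (G t)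

/-- A run of the Online Newton Step method on `K` over the rounds `1, …, T`, with step size `1/β`
and regularization `ε`: `w t` is the point played and `G t` the gradient received on round `t`.
The projected points are taken as given minimizers instead of being constructed. -/
structure IsOnlineNewtonRun {ι : Type*} [Fintype ι] [DecidableEq ι]
    (K : Set (EuclideanSpace ℝ ι)) (β ε : ℝ) (T : ℕ) (G w : ℕ → EuclideanSpace ℝ ι) : Prop where
  one_mem : w 1 ∈ K
  succ_mem : ∀ t ∈ Finset.Icc 1 T, w (t + 1) ∈ K
  isMinOn : ∀ t ∈ Finset.Icc 1 T,
    IsMinOn (fun v ↦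
      ⟪v - newtonPoint β ε G w t,
        Matrix.toEuclideanLin (regularizedGram ε G t) (v - newtonPoint β ε G w t)⟫)
      K (w (t + 1))

namespace IsOnlineNewtonRun

open Matrix

variable {ι : Type*} [Fintype ι] [DecidableEq ι] {K : Set (EuclideanSpace ℝ ι)}
  {β ε D L : ℝ} {T : ℕ} {G w : ℕ → EuclideanSpace ℝ ι} {u : EuclideanSpace ℝ ι}

lemma mem (h : IsOnlineNewtonRun K β ε T G w) {t : ℕ} (ht : t ∈ Finset.Icc 1 T) : w t ∈ K := by
  obtain ⟨ht1, htT⟩ := Finset.mem_Icc.1 ht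
  rcases ht1.eq_or_lt' with rfl | ht1
  · exact h.one_mem
  · obtain ⟨t, rfl⟩ := Nat.exists_eq_add_of_le' ht1.le
    exact h.succ_mem t (Finset.mem_Icc.2 ⟨by omega, by omega⟩)

lemma inner_sub_sq_le (h : IsOnlineNewtonRun K β ε T G w) (hK : Convex ℝ K) (hβ : 0 < β)
    (hε : 0 < ε) (hu : u ∈ K) {t : ℕ} (ht : t + 1 ∈ Finset.Icc 1 T) :
    ⟪G (t + 1), w (t + 1) - u⟫ - β / 2 * ⟪G (t + 1), w (t + 1) - u⟫ ^ 2 ≤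
      1 / (2 * β) * (Real.log (regularizedGram ε G (t + 1)).det -
        Real.log (regularizedGram ε G t).det) +
      β / 2 * (⟪w (t + 1) - u, toEuclideanLin (regularizedGram ε G t) (w (t + 1) - u)⟫ -
        ⟪w (t + 2) - u, toEuclideanLin (regularizedGram ε G (t + 1)) (w (t + 2) - u)⟫) := by
  set A := regularizedGram ε G
  set q : ℕ → EuclideanSpace ℝ ι → ℝ := fun n x ↦ ⟪x, toEuclideanLin (A n) x⟫
  have hA : (A (t + 1)).PosDef := posDef_regularizedGram hε _
  have hstep := two_mul_inner_map_sub_le_of_isMinOn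
    (isPositive_toEuclideanLin_iff.2 hA.posSemidef) hK (h.succ_mem _ ht) hu (h.isMinOn _ ht)
  rw [toEuclideanLin_apply_inv hA.det_pos.ne'.isUnit] at hstep
  have hlogdet : ⟪toEuclideanLin (A (t + 1))⁻¹ (G (t + 1)), G (t + 1)⟫ ≤
      Real.log (A (t + 1)).det - Real.log (A t).det := by
    have hpot := dotProduct_inv_add_vecMulVec_le_log_det_sub
      (posDef_regularizedGram (G := G) hε t) (G (t + 1)).ofLp
    rw [← regularizedGram_succ] at hpot
    simpa [EuclideanSpace.inner_eq_star_dotProduct, ofLp_toLpLin] using hpot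
  have hnorm : q (t + 1) (w (t + 1) - u) =
      q t (w (t + 1) - u) + ⟪G (t + 1), w (t + 1) - u⟫ ^ 2 := by
    simp only [q, A, regularizedGram_succ, map_add, LinearMap.add_apply, inner_add_right,
      inner_toEuclideanLin_vecMulVec_self]
  calc ⟪G (t + 1), w (t + 1) - u⟫ - β / 2 * ⟪G (t + 1), w (t + 1) - u⟫ ^ 2
      = β / 2 * (2 * (1 / β) * ⟪G (t + 1), w (t + 1) - u⟫) -
          β / 2 * ⟪G (t + 1), w (t + 1) - u⟫ ^ 2 := by field_simp
    _ ≤ β / 2 * ((1 / β) ^ 2 * (Real.log (A (t + 1)).det - Real.log (A t).det) +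
          (q (t + 1) (w (t + 1) - u) - q (t + 1) (w (t + 2) - u))) -
          β / 2 * ⟪G (t + 1), w (t + 1) - u⟫ ^ 2 := by
        gcongr
        exact hstep.trans (by gcongr)
    _ = _ := by
        rw [hnorm]
        field_simp
        ring

lemma sum_inner_sub_sq_le_log_det_sub (h : IsOnlineNewtonRun K β ε T G w) (hK : Convex ℝ K)
    (hβ : 0 < β) (hε : 0 < ε) (hu : u ∈ K) :
    ∑ t ∈ Finset.Icc 1 T, (⟪G t, w t - u⟫ - β / 2 * ⟪G t, w t - u⟫ ^ 2) ≤
      1 / (2 * β) * (Real.log (regularizedGram ε G T).det -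
        Real.log (regularizedGram ε G 0).det) + β / 2 * (ε * ‖w 1 - u‖ ^ 2) := by
  set A := regularizedGram ε G
  set potential : ℕ → ℝ := fun t ↦
    β / 2 * ⟪w (t + 1) - u, toEuclideanLin (A t) (w (t + 1) - u)⟫ -
      1 / (2 * β) * Real.log (A t).det
  have htele : ∑ t ∈ Finset.Icc 1 T, (⟪G t, w t - u⟫ - β / 2 * ⟪G t, w t - u⟫ ^ 2) ≤
      potential 0 - potential T := by
    rw [← Finset.sum_range_sub', Finset.range_eq_Ico, ← Finset.Ico_add_one_right_eq_Icc]
    refine (Finset.sum_Ico_add' _ 0 T 1).symm.trans_le (Finset.sum_le_sum fun t ht ↦ ?_)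
    have hround := h.inner_sub_sq_le hK hβ hε hu (t := t) (by simp_all)
    simp only [potential]
    linarith
  have hinit : ⟪w 1 - u, toEuclideanLin (A 0) (w 1 - u)⟫ = ε * ‖w 1 - u‖ ^ 2 := by
    simp [A, regularizedGram_zero, real_inner_smul_right]
  have hAT := isPositive_toEuclideanLin_iff.2 (posDef_regularizedGram (G := G) hε T).posSemidef
  have hfinal : 0 ≤ β / 2 * ⟪w (T + 1) - u, toEuclideanLin (A T) (w (T + 1) - u)⟫ :=
    mul_nonneg (half_pos hβ).le (hAT.inner_nonneg_right _)
  simp only [potential, zero_add, hinit] at htele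
  linarith

theorem sum_inner_sub_sq_le (h : IsOnlineNewtonRun K β ε T G w) (hK : Convex ℝ K) (hβ : 0 < β)
    (hε : 0 < ε) (hG : ∀ t ∈ Finset.Icc 1 T, ‖G t‖ ≤ L) (hu : u ∈ K) (hD : ‖w 1 - u‖ ≤ D) :
    ∑ t ∈ Finset.Icc 1 T, (⟪G t, w t - u⟫ - β / 2 * ⟪G t, w t - u⟫ ^ 2) ≤
      1 / (2 * β) * (Fintype.card ι * Real.log (1 + T * L ^ 2 / (ε * Fintype.card ι))) +
        β / 2 * (ε * D ^ 2) := by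
  refine (h.sum_inner_sub_sq_le_log_det_sub hK hβ hε hu).trans ?_
  gcongr
  exact log_det_regularizedGram_sub_le hε hG

end IsOnlineNewtonRun

section Tuning

lemma one_div_min_le_add {a b : ℝ} (ha : 0 < a) (hb : 0 < b) :
    1 / min a b ≤ 1 / a + 1 / b := by
  rcases min_choice a b with h | h <;> rw [h]
  · exact le_add_of_nonneg_right (by positivity)
  · exact le_add_of_nonneg_left (by positivity)

lemma log_one_add_mul_add_one_le {T c : ℝ} (hT : 4 ≤ T) (hc : 0 ≤ c) (hc' : c ≤ 1 / 4) :
    Real.log (1 + T * c) + 1 ≤ 5 / 4 * Real.log T := by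
  have hhalf : 1 + T * c ≤ T / 2 := by
    linarith [mul_le_mul_of_nonneg_left hc' (by positivity : 0 ≤ T)]
  have hlog : Real.log (1 + T * c) ≤ Real.log T - Real.log 2 := by
    rw [← Real.log_div (by positivity) two_ne_zero]
    exact Real.log_le_log (by positivity) hhalf
  have hlogT : 2 * Real.log 2 ≤ Real.log T := by
    rw [← Real.log_rpow two_pos]
    exact Real.log_le_log (by positivity) (by norm_num; exact hT)
  linarith [Real.log_two_gt_d9]

lemma tuned_regret_bound_le {n α L D β T : ℝ} (hn : 1 ≤ n) (hα : 0 < α) (hL : 0 < L)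
    (hD : 0 < D) (hβ : β = 1 / 2 * min (1 / (4 * D * L)) α) (hT : 4 ≤ T) :
    1 / (2 * β) * (n * Real.log (1 + T * L ^ 2 / (1 / (β ^ 2 * D ^ 2) * n))) +
        β / 2 * (1 / (β ^ 2 * D ^ 2) * D ^ 2) ≤
      5 * n * (1 / α + L * D) * Real.log T := by
  have hβ_pos : 0 < β := by rw [hβ]; positivity
  have hstep : 1 / (2 * β) ≤ 4 * (1 / α + L * D) := calc
    1 / (2 * β) = 1 / min (1 / (4 * D * L)) α := by rw [hβ]; ring
    _ ≤ 1 / (1 / (4 * D * L)) + 1 / α := one_div_min_le_add (by positivity) hα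
    _ = 4 * (L * D) + 1 / α := by rw [one_div_one_div]; ring
    _ ≤ 4 * (1 / α + L * D) := by linarith [one_div_pos.2 hα]
  have hLβD : L * β * D ≤ 1 / 8 := calc
    L * β * D ≤ L * (1 / 2 * (1 / (4 * D * L))) * D := by
      rw [hβ]; gcongr; exact min_le_left _ _
    _ = 1 / 8 := by field_simp; norm_num
  have hratio : (L * β * D) ^ 2 / n ≤ 1 / 4 := calc
    (L * β * D) ^ 2 / n ≤ (1 / 8) ^ 2 / 1 := by gcongr
    _ ≤ 1 / 4 := by norm_num
  have hlog := log_one_add_mul_add_one_le hT (by positivity) hratio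
  have hn_log : n * Real.log (1 + T * ((L * β * D) ^ 2 / n)) + 1 ≤
      n * (5 / 4 * Real.log T) := calc
    _ ≤ n * Real.log (1 + T * ((L * β * D) ^ 2 / n)) + n := by gcongr
    _ = n * (Real.log (1 + T * ((L * β * D) ^ 2 / n)) + 1) := by ring
    _ ≤ n * (5 / 4 * Real.log T) := by gcongr
  have hlogT : 0 ≤ Real.log T := Real.log_nonneg (by linarith)
  calc 1 / (2 * β) * (n * Real.log (1 + T * L ^ 2 / (1 / (β ^ 2 * D ^ 2) * n))) +
        β / 2 * (1 / (β ^ 2 * D ^ 2) * D ^ 2)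
      = 1 / (2 * β) * (n * Real.log (1 + T * ((L * β * D) ^ 2 / n)) + 1) := by
        field_simp
    _ ≤ 1 / (2 * β) * (n * (5 / 4 * Real.log T)) := by
        gcongr
    _ ≤ 4 * (1 / α + L * D) * (n * (5 / 4 * Real.log T)) := by
        gcongr
    _ = 5 * n * (1 / α + L * D) * Real.log T := by ring

end Tuning

theorem online_newton_step_regret_general {ι : Type*} [Fintype ι] [DecidableEq ι]
    (K : Set (EuclideanSpace ℝ ι)) (hKconv : Convex ℝ K)
    (D : ℝ) (hD : 0 < D) (hdiam : ∀ x ∈ K, ∀ y ∈ K, ‖x - y‖ ≤ D)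
    (α L : ℝ) (hα : 0 < α) (hL : 0 < L)
    (β : ℝ) (hβ : β = 1 / 2 * min (1 / (4 * D * L)) α)
    (T : ℕ) (g : ℕ → EuclideanSpace ℝ ι → ℝ)
    (g' : ℕ → EuclideanSpace ℝ ι → EuclideanSpace ℝ ι)
    (hg : ∀ t ∈ Finset.Icc 1 T, ∀ v ∈ K, HasGradientAt (g t) (g' t v) v)
    (hgL : ∀ t ∈ Finset.Icc 1 T, ∀ v ∈ K, ‖g' t v‖ ≤ L)
    (hcurv : ∀ t ∈ Finset.Icc 1 T, ∀ v ∈ K, ∀ w ∈ K,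
      g t w + ⟪g' t w, v - w⟫ + β / 2 * ⟪g' t w, w - v⟫ ^ 2 ≤ g t v)
    (w : ℕ → EuclideanSpace ℝ ι) (hw1 : w 1 ∈ K)
    (A : ℕ → Matrix ι ι ℝ) (hA0 : A 0 = (1 / (β ^ 2 * D ^ 2)) • (1 : Matrix ι ι ℝ))
    (hA : ∀ t, A (t + 1) =
      A t + Matrix.vecMulVec (g' (t + 1) (w (t + 1))) (g' (t + 1) (w (t + 1))))
    (y : ℕ → EuclideanSpace ℝ ι)
    (hy : ∀ t, y t = w t - (1 / β) • Matrix.toEuclideanLin (A t)⁻¹ (g' t (w t)))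
    (hproj : ∀ t ∈ Finset.Icc 1 T, w (t + 1) ∈ K ∧ ∀ v ∈ K,
      ⟪w (t + 1) - y t, Matrix.toEuclideanLin (A t) (w (t + 1) - y t)⟫ ≤
        ⟪v - y t, Matrix.toEuclideanLin (A t) (v - y t)⟫) :
    (∀ t, (A t).PosDef) ∧
    ∀ u ∈ K, 4 ≤ T →
      ∑ t ∈ Finset.Icc 1 T, (g t (w t) - g t u) ≤
        5 * Fintype.card ι * (1 / α + L * D) * Real.log T := by
  have hβ_pos : 0 < β := by rw [hβ]; positivity
  have hε : 0 < 1 / (β ^ 2 * D ^ 2) := by positivity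
  obtain rfl : A = regularizedGram (1 / (β ^ 2 * D ^ 2)) fun t ↦ g' t (w t) := by
    funext t
    induction t with
    | zero => rw [hA0, regularizedGram_zero]
    | succ t ih => rw [hA, ih, regularizedGram_succ]
  refine ⟨posDef_regularizedGram hε, fun u hu hT ↦ ?_⟩
  cases isEmpty_or_nonempty ι with
  | inl _ => simp [Subsingleton.elim (w _) u]
  | inr _ =>
    obtain rfl : y = _ := funext hy
    have hrun : IsOnlineNewtonRun K β (1 / (β ^ 2 * D ^ 2)) T (fun t ↦ g' t (w t)) w :=
      ⟨hw1, fun t ht ↦ (hproj t ht).1, fun t ht ↦ isMinOn_iff.2 (hproj t ht).2⟩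
    calc ∑ t ∈ Finset.Icc 1 T, (g t (w t) - g t u)
        ≤ ∑ t ∈ Finset.Icc 1 T,
            (⟪g' t (w t), w t - u⟫ - β / 2 * ⟪g' t (w t), w t - u⟫ ^ 2) := by
          refine Finset.sum_le_sum fun t ht ↦ ?_
          have hlower := hcurv t ht u hu (w t) (hrun.mem ht)
          rw [← neg_sub (w t) u, inner_neg_right] at hlower
          linarith
      _ ≤ _ := hrun.sum_inner_sub_sq_le hKconv hβ_pos hε
          (fun t ht ↦ hgL t ht _ (hrun.mem ht)) hu (hdiam _ hw1 u hu)
      _ ≤ _ := tuned_regret_bound_le (Nat.one_le_cast.2 Fintype.card_pos) hα hL hD hβ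
          (Nat.ofNat_le_cast.2 hT)

/-- **Online Newton Step / `NProp` regret bound.**
Let `K ⊆ ℝ^d` be nonempty compact convex with diameter at most `D > 0`, let
`α, L > 0` and `β = (1/2)·min {1/(4DL), α}`.  On rounds `t = 1, …, T` the losses
`g t` are differentiable with gradients bounded by `L` on `K` and satisfy the
exp-concavity curvature condition
`g t v ≥ g t w + ⟪∇g t w, v - w⟫ + (β/2)·⟪∇g t w, w - v⟫²` on `K`.
The algorithm starts at `w 1 ∈ K` with `A 0 = (1/(β²D²))·I`, and on round `t` sets
`A t = A (t-1) + ∇ᵗ(∇ᵗ)ᵀ`, `y t = w t - (1/β)·(A t)⁻¹·∇ᵗ` and lets `w (t+1)` be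
the point of `K` minimizing `v ↦ ⟪v - y t, A t · (v - y t)⟫`.  Then each `A t` is
positive definite and for every `u ∈ K` and `T ≥ 4`:
`∑_{t=1}^T (g t (w t) - g t u) ≤ 5·d·(1/α + L·D)·log T`. -/
theorem online_newton_step_regret
    {d : ℕ} (K : Set (EuclideanSpace ℝ (Fin d)))
    (hKne : K.Nonempty) (hKcomp : IsCompact K) (hKconv : Convex ℝ K)
    (D : ℝ) (hD : 0 < D) (hdiam : ∀ x ∈ K, ∀ y ∈ K, ‖x - y‖ ≤ D)
    (α L : ℝ) (hα : 0 < α) (hL : 0 < L)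
    (β : ℝ) (hβ : β = (1/2) * min (1/(4*D*L)) α)
    (T : ℕ)
    (g : ℕ → EuclideanSpace ℝ (Fin d) → ℝ)
    (g' : ℕ → EuclideanSpace ℝ (Fin d) → EuclideanSpace ℝ (Fin d))
    (hg : ∀ t ∈ Finset.Icc 1 T, ∀ v, HasGradientAt (g t) (g' t v) v)
    (hgL : ∀ t ∈ Finset.Icc 1 T, ∀ v ∈ K, ‖g' t v‖ ≤ L)
    (hcurv : ∀ t ∈ Finset.Icc 1 T, ∀ v ∈ K, ∀ w ∈ K,
      g t v ≥ g t w + ⟪g' t w, v - w⟫ + (β/2) * ⟪g' t w, w - v⟫^2)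
    (w : ℕ → EuclideanSpace ℝ (Fin d)) (hw1 : w 1 ∈ K)
    (A : ℕ → Matrix (Fin d) (Fin d) ℝ)
    (hA0 : A 0 = (1/(β^2 * D^2)) • (1 : Matrix (Fin d) (Fin d) ℝ))
    (hA : ∀ t, A (t+1) =
      A t + Matrix.vecMulVec (g' (t+1) (w (t+1))) (g' (t+1) (w (t+1))))
    (y : ℕ → EuclideanSpace ℝ (Fin d))
    (hy : ∀ t, y t = w t - (1/β) • (Matrix.toEuclideanLin (A t)⁻¹ (g' t (w t))))
    (hproj : ∀ t ∈ Finset.Icc 1 T, w (t+1) ∈ K ∧ ∀ v ∈ K,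
      ⟪w (t+1) - y t, Matrix.toEuclideanLin (A t) (w (t+1) - y t)⟫ ≤
        ⟪v - y t, Matrix.toEuclideanLin (A t) (v - y t)⟫) :
    (∀ t, (A t).PosDef) ∧
    ∀ u ∈ K, 4 ≤ T →
      ∑ t ∈ Finset.Icc 1 T, (g t (w t) - g t u) ≤
        5 * d * (1/α + L * D) * Real.log T := by
  simpa using online_newton_step_regret_general K hKconv D hD hdiam α L hα hL β hβ T g g'
    (fun t ht v _ ↦ hg t ht v) hgL hcurv w hw1 A hA0 hA y hy hproj
end
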